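/- For the weighted directed cycle digraph with all weights positive, let Q₂ be the n×n real matrix whose first n−1 columns are the columns of Rᵀ and whose last column is the vector (1/w 0, 1/w 1, …, 1/w (n−1)) (i.e., W⁻¹ * 1ₙ). Then Q₂ is invertible and Q₂⁻¹ * Le * Q₂ equals the block-diagonal matrix diag(Eτᵀ * W * Rᵀ, 0), i.e., the n×n matrix whose upper-left (n−1)×(n−1) block is Eτᵀ * W * Rᵀ and all of whose remaining entries are zero. -/

import Mathlib

open Matrix

/-!
Every edge of the cycle is a combination of tree edges, `E = Eτ * R`, because `Tτ` is the least
squares solution of the solvable system `Eτ * X = Ec`. Hence `Le = Rᵀ * (Eτᵀ * W)` is a product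
`M * P`, which `[M  N]` intertwines with `diag(P * M, 0)` as soon as `P * N = 0`; here
`N = W⁻¹ * 1` is a solution since the columns of `E` sum to zero. As `Tτ = -1`, a Schur complement
gives `det Q₂ = ∑ i, 1 / w i`.

The Gram matrix `Eτᵀ * Eτ` is nonsingular whenever `n ≠ 0` in the field: a vector `Eτ * x` in the
kernel of `Eτᵀ` is constant and sums to zero.
-/

section BlockMatrices

variable {ι τ κ K : Type*} [Fintype ι] [Fintype τ] [CommRing K]

lemma mul_mul_fromCols_eq_fromCols_mul_fromBlocks [Fintype κ] (M : Matrix ι τ K)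
    {P : Matrix τ ι K} {N : Matrix ι κ K} (hPN : P * N = 0) :
    M * P * fromCols M N = fromCols M N * fromBlocks (P * M) 0 0 (0 : Matrix κ κ K) := by
  rw [mul_fromCols, fromCols_mul_fromBlocks]
  simp only [Matrix.mul_assoc, hPN, Matrix.mul_zero, add_zero]

lemma nonsing_inv_mul_mul_submatrix_eq_fromBlocks [Finite κ] [DecidableEq ι] {Q : Matrix ι ι K}
    (hQ : IsUnit Q) (e : τ ⊕ κ ≃ ι) {M : Matrix ι τ K} {P : Matrix τ ι K} {N : Matrix ι κ K}
    (hQe : Q.submatrix id e = fromCols M N) (hPN : P * N = 0) :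
    (Q⁻¹ * (M * P) * Q).submatrix e e = fromBlocks (P * M) 0 0 0 := by
  classical
  have := Fintype.ofFinite κ
  have inv_mul : Q⁻¹.submatrix e id * fromCols M N = 1 := by
    rw [← hQe, ← submatrix_mul _ _ _ _ _ Function.bijective_id,
      nonsing_inv_mul _ ((isUnit_iff_isUnit_det _).1 hQ), submatrix_one_equiv]
  calc (Q⁻¹ * (M * P) * Q).submatrix e e
      = Q⁻¹.submatrix e id * (M * P * fromCols M N) := by
        rw [← hQe, Matrix.mul_assoc]; rfl
    _ = fromBlocks (P * M) 0 0 0 := by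
        rw [mul_mul_fromCols_eq_fromCols_mul_fromBlocks M hPN, ← Matrix.mul_assoc, inv_mul,
          Matrix.one_mul]

variable [DecidableEq τ]

lemma gram_inv_mul_transpose_mul_cancel {A : Matrix ι τ K} (hA : IsUnit (Aᵀ * A))
    (X : Matrix τ κ K) : (Aᵀ * A)⁻¹ * Aᵀ * (A * X) = X := by
  rw [Matrix.mul_assoc, ← Matrix.mul_assoc Aᵀ,
    nonsing_inv_mul_cancel_left _ _ ((isUnit_iff_isUnit_det _).1 hA)]

lemma det_fromCols_transpose_fromCols_one [Fintype κ] [DecidableEq κ] (T : Matrix τ κ K)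
    (N : Matrix (τ ⊕ κ) κ K) :
    (fromCols (fromCols 1 T)ᵀ N).det = (N.toRows₂ - Tᵀ * N.toRows₁).det := by
  rw [transpose_fromCols, transpose_one, ← fromRows_toRows N, fromCols_fromRows_eq_fromBlocks,
    det_fromBlocks_one₁₁, toRows₁_fromRows, toRows₂_fromRows]

end BlockMatrices

section LastIndex

variable {α K : Type*} {m : ℕ}

lemma submatrix_id_finSumFinEquiv_eq_fromCols {M : Matrix α (Fin (m + 1)) K}
    {B : Matrix α (Fin m) K} {c : α → K}
    (hM : ∀ i (j : Fin (m + 1)), M i j = if h : j.val < m then B i ⟨j.val, h⟩ else c i) :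
    M.submatrix id (finSumFinEquiv (m := m) (n := 1)) = fromCols B (replicateCol (Fin 1) c) := by
  ext i (j | j) <;> simp [hM]

lemma apply_eq_dite_of_submatrix_finSumFinEquiv_eq_fromBlocks [Zero K]
    {M : Matrix (Fin (m + 1)) (Fin (m + 1)) K} {B : Matrix (Fin m) (Fin m) K}
    (hM : M.submatrix (finSumFinEquiv (m := m) (n := 1)) finSumFinEquiv = fromBlocks B 0 0 0)
    (i j : Fin (m + 1)) :
    M i j = if hi : i.val < m then (if hj : j.val < m then B ⟨i.val, hi⟩ ⟨j.val, hj⟩ else 0)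
      else 0 := by
  obtain ⟨i, rfl⟩ := (finSumFinEquiv (m := m) (n := 1)).surjective i
  obtain ⟨j, rfl⟩ := (finSumFinEquiv (m := m) (n := 1)).surjective j
  rw [← submatrix_apply M, hM]
  rcases i with i | i <;> rcases j with j | j <;> simp

end LastIndex

section Cycle

variable (K : Type*) (m : ℕ)

/-- The incidence matrix of the directed cycle on `Fin (m + 1)`, whose edge `i` goes from `i` to
`i + 1` modulo `m + 1`. A loop, for `m = 0`, has incidence `0`. -/
def cycleIncidence [Ring K] : Matrix (Fin (m + 1)) (Fin (m + 1)) K :=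
  1 - (1 : Matrix (Fin (m + 1)) (Fin (m + 1)) K).submatrix id (· + 1)

/-- The incidence matrix of the directed path `0 → 1 → ⋯ → m`, the in-branching of the cycle
with root `m`. -/
def pathIncidence [Ring K] : Matrix (Fin (m + 1)) (Fin m) K :=
  (cycleIncidence K m).submatrix id Fin.castSucc

/-- The matrix `R = [I  Tτ]` of the cycle, with `Tτ = -1`: its columns express the edges in terms
of the tree edges. -/
def cycleReduction [Ring K] : Matrix (Fin m) (Fin (m + 1)) K :=
  (fromCols 1 (replicateCol (Fin 1) (-1))).submatrix id finSumFinEquiv.symm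

variable {K m}

section Ring

variable [Ring K]

lemma pathIncidence_apply (v : Fin (m + 1)) (i : Fin m) :
    pathIncidence K m v i = (if v = i.castSucc then 1 else 0) - if v = i.succ then 1 else 0 := by
  simp [pathIncidence, cycleIncidence, one_apply]

lemma cycleIncidence_mulVec_one : cycleIncidence K m *ᵥ 1 = 0 := by
  ext v
  simp [cycleIncidence, mulVec, dotProduct, one_apply, ← sub_eq_iff_eq_add]

lemma one_vecMul_pathIncidence : 1 ᵥ* pathIncidence K m = 0 := by
  ext i
  simp [vecMul, dotProduct, pathIncidence_apply]

lemma transpose_pathIncidence_mulVec_apply (y : Fin (m + 1) → K) (i : Fin m) :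
    ((pathIncidence K m)ᵀ *ᵥ y) i = y i.castSucc - y i.succ := by
  simp [mulVec, dotProduct, pathIncidence_apply, sub_mul]

lemma apply_eq_apply_zero_of_transpose_pathIncidence_mulVec_eq_zero {y : Fin (m + 1) → K}
    (hy : (pathIncidence K m)ᵀ *ᵥ y = 0) (v : Fin (m + 1)) : y v = y 0 := by
  induction v using Fin.induction with
  | zero => rfl
  | succ i ih =>
    rw [← ih, eq_comm, ← sub_eq_zero, ← transpose_pathIncidence_mulVec_apply, hy, Pi.zero_apply]

lemma prefixIndicator_mul_pathIncidence :
    (of fun (i : Fin m) (v : Fin (m + 1)) => if v ≤ i.castSucc then (1 : K) else 0) *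
      pathIncidence K m = 1 := by
  ext i j
  simp only [mul_apply, of_apply, pathIncidence_apply, one_apply, mul_sub, mul_boole,
    Finset.sum_sub_distrib, Finset.sum_ite_eq', Finset.mem_univ, if_true,
    Fin.castSucc_le_castSucc_iff, Fin.succ_le_castSucc_iff]
  obtain h | rfl | h := lt_trichotomy i j
  · simp [h.not_ge, h.not_gt, h.ne]
  · simp
  · simp [h.le, h, h.ne']

lemma cycleIncidence_submatrix_last :
    (cycleIncidence K m).submatrix id (fun _ : Fin 1 => Fin.last m) =
      pathIncidence K m * (replicateCol (Fin 1) (-1) : Matrix (Fin m) (Fin 1) K) := by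
  ext v _
  have row_sum := congrFun (cycleIncidence_mulVec_one (K := K) (m := m)) v
  simp only [mulVec, dotProduct_one, Fin.sum_univ_castSucc, Pi.zero_apply] at row_sum
  simpa [mul_apply, pathIncidence] using eq_neg_of_add_eq_zero_right row_sum

lemma cycleReduction_submatrix_finSumFinEquiv :
    (cycleReduction K m).submatrix id (finSumFinEquiv (m := m) (n := 1)) =
      fromCols 1 (replicateCol (Fin 1) (-1)) := by
  simp [cycleReduction]

lemma pathIncidence_mul_cycleReduction :
    pathIncidence K m * cycleReduction K m = cycleIncidence K m := by
  apply (reindex (Equiv.refl _) (finSumFinEquiv (m := m) (n := 1)).symm).injective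
  calc (pathIncidence K m * cycleReduction K m).submatrix id finSumFinEquiv
      = pathIncidence K m *
          (fromCols 1 (replicateCol (Fin 1) (-1)) : Matrix (Fin m) (Fin m ⊕ Fin 1) K) := by
        rw [← cycleReduction_submatrix_finSumFinEquiv]; rfl
    _ = fromCols (pathIncidence K m)
          ((cycleIncidence K m).submatrix id (fun _ : Fin 1 => Fin.last m)) := by
        rw [mul_fromCols, Matrix.mul_one, cycleIncidence_submatrix_last]
    _ = (cycleIncidence K m).submatrix id finSumFinEquiv := by
        ext v (j | j)
        · rfl
        · rw [Subsingleton.elim j 0]; rfl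

lemma eq_cycleIncidence (hm : 1 < m + 1) {E : Matrix (Fin (m + 1)) (Fin (m + 1)) K}
    (hE : ∀ v i, E v i = if v = i then 1 else if v = i + ⟨1, hm⟩ then -1 else 0) :
    E = cycleIncidence K m := by
  have one_eq : (⟨1, hm⟩ : Fin (m + 1)) = 1 := Fin.ext (by simp [Nat.mod_eq_of_lt hm])
  ext v i
  rw [hE, one_eq]
  by_cases h : v = i
  · simp [cycleIncidence, one_apply, h, (Nat.lt_add_left_iff_pos.1 hm).ne']
  · simp [cycleIncidence, one_apply, h, neg_ite]

lemma eq_cycleReduction {R : Matrix (Fin m) (Fin (m + 1)) K}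
    (hR : ∀ (i : Fin m) (j : Fin (m + 1)), R i j =
      if j.val < m then (if i.val = j.val then 1 else 0) else -1) :
    R = cycleReduction K m := by
  apply (reindex (Equiv.refl _) (finSumFinEquiv (m := m) (n := 1)).symm).injective
  refine Eq.trans ?_ cycleReduction_submatrix_finSumFinEquiv.symm
  ext i (j | j) <;> simp [hR, one_apply, Fin.ext_iff]

end Ring

lemma det_eq_sum_of_submatrix_eq_fromCols_cycleReduction [CommRing K]
    {Q : Matrix (Fin (m + 1)) (Fin (m + 1)) K} {v : Fin (m + 1) → K}
    (hQ : Q.submatrix id (finSumFinEquiv (m := m) (n := 1)) =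
      fromCols (cycleReduction K m)ᵀ (replicateCol (Fin 1) v)) :
    Q.det = ∑ i, v i := by
  have hQ_blocks : Q.submatrix finSumFinEquiv finSumFinEquiv =
      fromCols (fromCols 1 (replicateCol (Fin 1) (-1)))ᵀ
        (replicateCol (Fin 1) (v ∘ finSumFinEquiv)) := by
    rw [← cycleReduction_submatrix_finSumFinEquiv]
    ext i j
    refine (congrFun₂ hQ (finSumFinEquiv i) j).trans ?_
    rcases j with j | j <;> rfl
  rw [← det_submatrix_equiv_self finSumFinEquiv, hQ_blocks, det_fromCols_transpose_fromCols_one,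
    det_unique, Fin.sum_univ_castSucc]
  simp only [Matrix.sub_apply, mul_apply, transpose_apply, replicateCol_apply, toRows₁_apply,
    toRows₂_apply, Pi.neg_apply, Pi.one_apply, neg_one_mul, Finset.sum_neg_distrib, sub_neg_eq_add,
    Function.comp_apply, finSumFinEquiv_apply_left, finSumFinEquiv_apply_right, add_comm]
  rfl

lemma isUnit_gram_pathIncidence [Field K] (hm : ((m + 1 : ℕ) : K) ≠ 0) :
    IsUnit ((pathIncidence K m)ᵀ * pathIncidence K m) := by
  rw [← mulVec_injective_iff_isUnit, ← coe_mulVecLin, injective_iff_map_eq_zero]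
  intro x hx
  set y := pathIncidence K m *ᵥ x with hy
  have y_const : ∀ v, y v = y 0 :=
    apply_eq_apply_zero_of_transpose_pathIncidence_mulVec_eq_zero (by rwa [hy, mulVec_mulVec])
  have y_sum : ∑ v, y v = 0 := by
    rw [← one_dotProduct, hy, dotProduct_mulVec, one_vecMul_pathIncidence, zero_dotProduct]
  have y_zero : y = 0 := by
    ext v
    simp only [y_const, Finset.sum_const, Finset.card_univ, Fintype.card_fin, nsmul_eq_mul,
      mul_eq_zero, hm, false_or] at y_sum
    rw [y_const, y_sum, Pi.zero_apply]
  rw [← one_mulVec x, ← prefixIndicator_mul_pathIncidence, ← mulVec_mulVec, ← hy, y_zero,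
    mulVec_zero]

lemma gram_inv_mul_transpose_mul_cycleIncidence_last [Field K] (hm : ((m + 1 : ℕ) : K) ≠ 0) :
    ((pathIncidence K m)ᵀ * pathIncidence K m)⁻¹ * (pathIncidence K m)ᵀ *
      (cycleIncidence K m).submatrix id (fun _ : Fin 1 => Fin.last m) =
        replicateCol (Fin 1) (-1) := by
  rw [cycleIncidence_submatrix_last,
    gram_inv_mul_transpose_mul_cancel (isUnit_gram_pathIncidence hm)]

lemma transpose_pathIncidence_mul_diagonal_mul_one_div [Field K] {w : Fin (m + 1) → K}
    (hw : ∀ i, w i ≠ 0) :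
    (pathIncidence K m)ᵀ * diagonal w * replicateCol (Fin 1) (fun i => 1 / w i) = 0 := by
  have diagonal_mul : diagonal w * replicateCol (Fin 1) (fun i => 1 / w i) =
      replicateCol (Fin 1) 1 := by
    ext i _
    simp [hw i]
  rw [Matrix.mul_assoc, diagonal_mul, ← replicateCol_mulVec, mulVec_transpose,
    one_vecMul_pathIncidence]
  rfl

end Cycle

theorem cycle_edgeLaplacian_similar_block_diagonal_general
    {K : Type*} [Field K] (n : ℕ) (hn : 2 ≤ n) (hnK : (n : K) ≠ 0)
    (w : Fin n → K) (hw : ∀ i, w i ≠ 0) (hw_sum : ∑ i, 1 / w i ≠ 0)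
    (E : Matrix (Fin n) (Fin n) K)
    (hE : ∀ v i, E v i = if v = i then 1 else if v = i + ⟨1, hn⟩ then -1 else 0)
    (A : Matrix (Fin n) (Fin n) K) (hA : A = 1)
    (W : Matrix (Fin n) (Fin n) K) (hW : W = Matrix.diagonal w)
    (Le : Matrix (Fin n) (Fin n) K) (hLe : Le = Eᵀ * A * W)
    (Eτ : Matrix (Fin n) (Fin (n - 1)) K)
    (hEτ : Eτ = E.submatrix id
      (fun i : Fin (n - 1) => ⟨i.val, lt_of_lt_of_le i.2 (Nat.sub_le n 1)⟩))
    (Ec : Matrix (Fin n) (Fin 1) K)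
    (hEc : Ec = E.submatrix id (fun _ => ⟨n - 1, Nat.sub_one_lt_of_lt hn⟩))
    (Tτ : Matrix (Fin (n - 1)) (Fin 1) K)
    (hTτ : Tτ = (Eτᵀ * Eτ)⁻¹ * Eτᵀ * Ec)
    (R : Matrix (Fin (n - 1)) (Fin n) K)
    (hR : ∀ (i : Fin (n - 1)) (j : Fin n), R i j =
      if j.val < n - 1 then (if i.val = j.val then 1 else 0) else Tτ i 0)
    (Q₂ : Matrix (Fin n) (Fin n) K)
    (hQ₂ : ∀ (i j : Fin n), Q₂ i j =
      if h : j.val < n - 1 then Rᵀ i ⟨j.val, h⟩ else 1 / w i) :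
    IsUnit Q₂ ∧
    ∀ (i j : Fin n), (Q₂⁻¹ * Le * Q₂) i j =
      if hi : i.val < n - 1 then
        (if hj : j.val < n - 1 then (Eτᵀ * W * Rᵀ) ⟨i.val, hi⟩ ⟨j.val, hj⟩ else 0)
      else 0 := by
  obtain ⟨m, rfl⟩ : ∃ m, n = m + 1 := ⟨n - 1, by omega⟩
  obtain rfl : E = cycleIncidence K m := eq_cycleIncidence hn hE
  obtain rfl : Eτ = pathIncidence K m := hEτ
  obtain rfl : Tτ = replicateCol (Fin 1) (-1) := by
    rw [hTτ, hEc]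
    exact gram_inv_mul_transpose_mul_cycleIncidence_last hnK
  obtain rfl : R = cycleReduction K m := eq_cycleReduction hR
  have hQ_cols : Q₂.submatrix id (finSumFinEquiv (m := m) (n := 1)) =
      fromCols (cycleReduction K m)ᵀ (replicateCol (Fin 1) fun i => 1 / w i) :=
    submatrix_id_finSumFinEquiv_eq_fromCols hQ₂
  have hQ : IsUnit Q₂ := by
    rw [isUnit_iff_isUnit_det, det_eq_sum_of_submatrix_eq_fromCols_cycleReduction hQ_cols]
    exact hw_sum.isUnit
  have hLe_factor : Le = (cycleReduction K m)ᵀ * ((pathIncidence K m)ᵀ * W) := by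
    rw [hLe, hA, Matrix.mul_one, ← pathIncidence_mul_cycleReduction, transpose_mul,
      Matrix.mul_assoc]
  subst hLe_factor hW
  exact ⟨hQ, apply_eq_dite_of_submatrix_finSumFinEquiv_eq_fromBlocks
    (nonsing_inv_mul_mul_submatrix_eq_fromBlocks hQ finSumFinEquiv hQ_cols
      (transpose_pathIncidence_mul_diagonal_mul_one_div hw))⟩

/-- For the weighted directed cycle digraph with positive weights, the
edge Laplacian `Le = Eᵀ * A * W` is similar, via the matrix `Q₂` with columns `Rᵀ` and
`W⁻¹ 1ₙ`, to the block diagonal matrix `diag(Eτᵀ * W * Rᵀ, 0)`. -/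
theorem cycle_edgeLaplacian_similar_block_diagonal
    (n : ℕ) (hn : 2 ≤ n) (w : Fin n → ℝ) (hw : ∀ i, 0 < w i)
    (E : Matrix (Fin n) (Fin n) ℝ)
    (hE : ∀ v i, E v i = if v = i then 1 else if v = i + ⟨1, by omega⟩ then -1 else 0)
    (A : Matrix (Fin n) (Fin n) ℝ) (hA : A = 1)
    (W : Matrix (Fin n) (Fin n) ℝ) (hW : W = Matrix.diagonal w)
    (Le : Matrix (Fin n) (Fin n) ℝ) (hLe : Le = Eᵀ * A * W)
    (Eτ : Matrix (Fin n) (Fin (n - 1)) ℝ)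
    (hEτ : Eτ = E.submatrix id
      (fun i : Fin (n - 1) => ⟨i.val, lt_of_lt_of_le i.2 (Nat.sub_le n 1)⟩))
    (Ec : Matrix (Fin n) (Fin 1) ℝ)
    (hEc : Ec = E.submatrix id (fun _ => ⟨n - 1, by omega⟩))
    (Tτ : Matrix (Fin (n - 1)) (Fin 1) ℝ)
    (hTτ : Tτ = (Eτᵀ * Eτ)⁻¹ * Eτᵀ * Ec)
    (R : Matrix (Fin (n - 1)) (Fin n) ℝ)
    (hR : ∀ (i : Fin (n - 1)) (j : Fin n), R i j =
      if h : j.val < n - 1 then (if i.val = j.val then 1 else 0) else Tτ i 0)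
    (Q₂ : Matrix (Fin n) (Fin n) ℝ)
    (hQ₂ : ∀ (i j : Fin n), Q₂ i j =
      if h : j.val < n - 1 then Rᵀ i ⟨j.val, h⟩ else 1 / w i) :
    IsUnit Q₂ ∧
    ∀ (i j : Fin n), (Q₂⁻¹ * Le * Q₂) i j =
      if hi : i.val < n - 1 then
        (if hj : j.val < n - 1 then (Eτᵀ * W * Rᵀ) ⟨i.val, hi⟩ ⟨j.val, hj⟩ else 0)
      else 0 := by
  have hw_sum : 0 < ∑ i, 1 / w i :=
    Finset.sum_pos (fun i _ => one_div_pos.2 (hw i)) ⟨⟨0, by omega⟩, Finset.mem_univ _⟩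
  exact cycle_edgeLaplacian_similar_block_diagonal_general n hn (Nat.cast_ne_zero.2 (by omega)) w
    (fun i => (hw i).ne') hw_sum.ne' E hE A hA W hW Le hLe Eτ hEτ Ec hEc Tτ hTτ R hR Q₂ hQ₂
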